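/- Let g, h be Schwartz functions on ℝ. There exists a constant C > 0 such that for all τ, λ ∈ ℝ and every real Φ with |Φ| ≥ 1: ∫_ℝ |g(τ−μ)|·|h(μ/Φ)|·(⟨Φ⟩·⟨μ−λ⟩)^{−1} dμ ≤ C·⟨τ−λ⟩^{−1}·min(⟨Φ⟩^{−1}, ⟨τ⟩^{−1}). -/

import Mathlib

open MeasureTheory

/-!
The decay of `h`, together with `⟨μ⟩ ≤ ⟨Φ⟩⟨μ/Φ⟩`, gives the pointwise bound
`|h(μ/Φ)|⟨Φ⟩⁻¹ ≲ min(⟨Φ⟩⁻¹, ⟨μ⟩⁻¹)`. Peetre's inequality `⟨μ - ν⟩⁻¹ ≲ ⟨τ - μ⟩⟨τ - ν⟩⁻¹`, used with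
`ν = λ` and with `ν = 0`, replaces `μ` by `τ` in both remaining weights at the cost of a factor
`⟨τ - μ⟩²`, which the integrable function `g(τ - μ)` absorbs.
-/

/-- The Japanese bracket `⟨x⟩ = (1 + ‖x‖²)^{1/2}` of a vector, the weight in which decay is
measured. -/
noncomputable def japaneseBracket {V : Type*} [Norm V] (x : V) : ℝ :=
  √(1 + ‖x‖ ^ 2)

namespace japaneseBracket

lemma eq_sqrt_one_add_sq (x : ℝ) : japaneseBracket x = √(1 + x ^ 2) := by
  simp only [japaneseBracket, Real.norm_eq_abs, sq_abs]

variable {V : Type*} [NormedAddCommGroup V]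

lemma one_le (x : V) : 1 ≤ japaneseBracket x :=
  Real.one_le_sqrt.2 (le_add_of_nonneg_right (sq_nonneg ‖x‖))

lemma pos (x : V) : 0 < japaneseBracket x :=
  one_pos.trans_le (one_le x)

lemma continuous : Continuous (japaneseBracket : V → ℝ) := by
  unfold japaneseBracket
  fun_prop

lemma smul_le_mul {𝕜 : Type*} [NormedField 𝕜] [NormedSpace 𝕜 V] (c : 𝕜) (x : V) :
    japaneseBracket (c • x) ≤ japaneseBracket c * japaneseBracket x := by
  unfold japaneseBracket
  rw [← Real.sqrt_mul (by positivity), norm_smul]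
  apply Real.sqrt_le_sqrt
  nlinarith [sq_nonneg ‖c‖, sq_nonneg ‖x‖]

lemma add_le_sqrt_two_mul_mul (x y : V) :
    japaneseBracket (x + y) ≤ √2 * japaneseBracket x * japaneseBracket y := by
  unfold japaneseBracket
  rw [← Real.sqrt_mul (by positivity), ← Real.sqrt_mul (by positivity)]
  apply Real.sqrt_le_sqrt
  have norm_sq_le : ‖x + y‖ ^ 2 ≤ (‖x‖ + ‖y‖) ^ 2 := by gcongr; exact norm_add_le x y
  nlinarith [sq_nonneg (‖x‖ - ‖y‖), sq_nonneg (‖x‖ * ‖y‖)]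

lemma inv_sub_le (x y z : V) :
    (japaneseBracket (y - z))⁻¹ ≤
      √2 * japaneseBracket (x - y) * (japaneseBracket (x - z))⁻¹ := by
  have peetre := add_le_sqrt_two_mul_mul (x - y) (y - z)
  rw [sub_add_sub_cancel] at peetre
  rwa [← div_eq_mul_inv, le_div_iff₀ (pos _), inv_mul_le_iff₀ (pos _), mul_comm]

lemma min_inv_le {a : ℝ} (ha : 0 ≤ a) (x y : V) :
    min a (japaneseBracket y)⁻¹ ≤
      √2 * japaneseBracket (x - y) * min a (japaneseBracket x)⁻¹ := by
  have one_le_factor : 1 ≤ √2 * japaneseBracket (x - y) :=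
    one_le_mul_of_one_le_of_one_le (Real.one_le_sqrt.2 one_le_two) (one_le _)
  rw [mul_min_of_nonneg _ _ (by positivity)]
  refine min_le_min (le_mul_of_one_le_left ha one_le_factor) ?_
  simpa only [sub_zero] using inv_sub_le x y 0

end japaneseBracket

section SchwartzDecay

variable {V F : Type*} [NormedAddCommGroup V] [NormedSpace ℝ V] [NormedAddCommGroup F]
  [NormedSpace ℝ F]

lemma exists_norm_mul_japaneseBracket_pow_le (f : SchwartzMap V F) (k : ℕ) :
    ∃ C, ∀ x, ‖f x‖ * japaneseBracket x ^ k ≤ C := by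
  have decay := f.one_add_le_sup_seminorm_apply (𝕜 := ℝ) (m := (k, 0)) (n := 0) le_rfl le_rfl
  refine ⟨_, fun x ↦ le_trans ?_ (decay x)⟩
  rw [norm_iteratedFDeriv_zero, mul_comm]
  gcongr
  · exact (japaneseBracket.pos x).le
  · exact sqrt_one_add_norm_sq_le x

lemma integrable_norm_mul_japaneseBracket_pow [MeasurableSpace V] [BorelSpace V]
    [SecondCountableTopology V] (ν : Measure V) [ν.HasTemperateGrowth] (f : SchwartzMap V F)
    (k : ℕ) : Integrable (fun x ↦ ‖f x‖ * japaneseBracket x ^ k) ν := by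
  have weight_le (x : V) : japaneseBracket x ^ k ≤ 2 ^ (k - 1) * (‖x‖ ^ 0 + ‖x‖ ^ k) :=
    calc japaneseBracket x ^ k ≤ (1 + ‖x‖) ^ k :=
          pow_le_pow_left₀ (japaneseBracket.pos x).le (sqrt_one_add_norm_sq_le x) k
      _ ≤ 2 ^ (k - 1) * (‖x‖ ^ 0 + ‖x‖ ^ k) := by
          simpa only [one_pow, pow_zero] using add_pow_le zero_le_one (norm_nonneg x) k
  refine (((f.integrable_pow_mul ν 0).add (f.integrable_pow_mul ν k)).const_mul
    (2 ^ (k - 1))).mono'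
    (f.continuous.norm.mul (japaneseBracket.continuous.pow k)).aestronglyMeasurable
    (.of_forall fun x ↦ ?_)
  have := (japaneseBracket.pos x).le
  rw [Real.norm_of_nonneg (by positivity), Pi.add_apply, ← add_mul, ← mul_assoc, mul_comm]
  exact mul_le_mul_of_nonneg_right (weight_le x) (norm_nonneg _)

end SchwartzDecay

section WeightedConvolution

variable {𝕜 V F G : Type*} [NormedField 𝕜] [NormedAddCommGroup V] [NormedSpace 𝕜 V]
  [NormedAddCommGroup F] [NormedAddCommGroup G] {g : V → F} {h : V → G} {H : ℝ}

lemma norm_comp_inv_smul_mul_inv_japaneseBracket_le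
    (hH : ∀ x, ‖h x‖ * japaneseBracket x ≤ H) {Φ : 𝕜} (hΦ : Φ ≠ 0) (μ : V) :
    ‖h (Φ⁻¹ • μ)‖ * (japaneseBracket Φ)⁻¹ ≤
      H * min (japaneseBracket Φ)⁻¹ (japaneseBracket μ)⁻¹ := by
  have decay := hH (Φ⁻¹ • μ)
  have hΦ_pos := japaneseBracket.pos Φ
  have H_nonneg : 0 ≤ H :=
    (mul_nonneg (norm_nonneg _) (japaneseBracket.pos _).le).trans decay
  rw [mul_min_of_nonneg _ _ H_nonneg]
  apply le_min
  · have norm_le : ‖h (Φ⁻¹ • μ)‖ ≤ H :=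
      (le_mul_of_one_le_right (norm_nonneg _) (japaneseBracket.one_le _)).trans decay
    gcongr
  · have bracket_le := japaneseBracket.smul_le_mul Φ (Φ⁻¹ • μ)
    rw [smul_inv_smul₀ hΦ] at bracket_le
    rw [← div_eq_mul_inv, ← div_eq_mul_inv, div_le_div_iff₀ hΦ_pos (japaneseBracket.pos μ)]
    calc ‖h (Φ⁻¹ • μ)‖ * japaneseBracket μ
        ≤ ‖h (Φ⁻¹ • μ)‖ * (japaneseBracket Φ * japaneseBracket (Φ⁻¹ • μ)) := by gcongr
      _ = ‖h (Φ⁻¹ • μ)‖ * japaneseBracket (Φ⁻¹ • μ) * japaneseBracket Φ := by ring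
      _ ≤ H * japaneseBracket Φ := by gcongr

lemma norm_comp_inv_smul_mul_inv_japaneseBracket_mul_le
    (hH : ∀ x, ‖h x‖ * japaneseBracket x ≤ H) {Φ : 𝕜} (hΦ : Φ ≠ 0) (τ lam μ : V) :
    ‖h (Φ⁻¹ • μ)‖ * (japaneseBracket Φ * japaneseBracket (μ - lam))⁻¹ ≤
      japaneseBracket (τ - μ) ^ 2 * (2 * H * (japaneseBracket (τ - lam))⁻¹ *
        min (japaneseBracket Φ)⁻¹ (japaneseBracket τ)⁻¹) := by
  have H_nonneg : 0 ≤ H :=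
    (mul_nonneg (norm_nonneg _) (japaneseBracket.pos _).le).trans (hH 0)
  have hΦ_pos := japaneseBracket.pos Φ
  have hμ_pos := japaneseBracket.pos (μ - lam)
  have hτ_pos := japaneseBracket.pos τ
  have hτμ_pos := japaneseBracket.pos (τ - μ)
  calc ‖h (Φ⁻¹ • μ)‖ * (japaneseBracket Φ * japaneseBracket (μ - lam))⁻¹
      = ‖h (Φ⁻¹ • μ)‖ * (japaneseBracket Φ)⁻¹ * (japaneseBracket (μ - lam))⁻¹ := by
        rw [mul_inv, mul_assoc]
    _ ≤ H * min (japaneseBracket Φ)⁻¹ (japaneseBracket μ)⁻¹ *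
          (japaneseBracket (μ - lam))⁻¹ := by
        gcongr ?_ * _
        exact norm_comp_inv_smul_mul_inv_japaneseBracket_le hH hΦ μ
    _ ≤ H * (√2 * japaneseBracket (τ - μ) * min (japaneseBracket Φ)⁻¹ (japaneseBracket τ)⁻¹) *
          (√2 * japaneseBracket (τ - μ) * (japaneseBracket (τ - lam))⁻¹) := by
        gcongr
        · exact japaneseBracket.min_inv_le (inv_nonneg.2 hΦ_pos.le) τ μ
        · exact japaneseBracket.inv_sub_le τ μ lam
    _ = √2 ^ 2 * H * japaneseBracket (τ - μ) ^ 2 * (japaneseBracket (τ - lam))⁻¹ *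
          min (japaneseBracket Φ)⁻¹ (japaneseBracket τ)⁻¹ := by ring
    _ = _ := by rw [Real.sq_sqrt zero_le_two]; ring

lemma integral_norm_mul_norm_comp_inv_smul_le [MeasurableSpace V] [BorelSpace V]
    {ν : Measure V} [ν.IsAddLeftInvariant] [ν.IsNegInvariant]
    (hg : Integrable (fun x ↦ ‖g x‖ * japaneseBracket x ^ 2) ν)
    (hH : ∀ x, ‖h x‖ * japaneseBracket x ≤ H) {Φ : 𝕜} (hΦ : Φ ≠ 0) (τ lam : V) :
    ∫ μ, ‖g (τ - μ)‖ * ‖h (Φ⁻¹ • μ)‖ * (japaneseBracket Φ * japaneseBracket (μ - lam))⁻¹ ∂ν ≤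
      2 * H * (∫ x, ‖g x‖ * japaneseBracket x ^ 2 ∂ν) * (japaneseBracket (τ - lam))⁻¹ *
        min (japaneseBracket Φ)⁻¹ (japaneseBracket τ)⁻¹ := by
  set K := 2 * H * (japaneseBracket (τ - lam))⁻¹ *
    min (japaneseBracket Φ)⁻¹ (japaneseBracket τ)⁻¹ with hK
  calc ∫ μ, ‖g (τ - μ)‖ * ‖h (Φ⁻¹ • μ)‖ *
        (japaneseBracket Φ * japaneseBracket (μ - lam))⁻¹ ∂ν
      ≤ ∫ μ, ‖g (τ - μ)‖ * japaneseBracket (τ - μ) ^ 2 * K ∂ν := by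
        refine integral_mono_of_nonneg (.of_forall fun μ ↦ ?_)
          ((hg.comp_sub_left τ).mul_const K) (.of_forall fun μ ↦ ?_)
        · have := japaneseBracket.pos Φ
          have := japaneseBracket.pos (μ - lam)
          positivity
        · simp only [mul_assoc ‖g (τ - μ)‖]
          gcongr _ * ?_
          exact norm_comp_inv_smul_mul_inv_japaneseBracket_mul_le hH hΦ τ lam μ
    _ = (∫ x, ‖g x‖ * japaneseBracket x ^ 2 ∂ν) * K := by
        rw [integral_mul_const,
          integral_sub_left_eq_self (fun x ↦ ‖g x‖ * japaneseBracket x ^ 2) ν τ]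
    _ = _ := by rw [hK]; ring

end WeightedConvolution

theorem contribution_II_estimate_general {𝕜 V F G : Type*} [NormedField 𝕜]
    [NormedAddCommGroup V] [NormedSpace ℝ V] [NormedSpace 𝕜 V] [MeasurableSpace V] [BorelSpace V]
    [SecondCountableTopology V] [NormedAddCommGroup F] [NormedSpace ℝ F] [NormedAddCommGroup G]
    [NormedSpace ℝ G] (ν : Measure V) [ν.HasTemperateGrowth] [ν.IsAddLeftInvariant]
    [ν.IsNegInvariant] (g : SchwartzMap V F) (h : SchwartzMap V G) :
    ∃ C > 0, ∀ (τ lam : V) (Φ : 𝕜), Φ ≠ 0 →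
      ∫ μ, ‖g (τ - μ)‖ * ‖h (Φ⁻¹ • μ)‖ * (japaneseBracket Φ * japaneseBracket (μ - lam))⁻¹ ∂ν ≤
        C * (japaneseBracket (τ - lam))⁻¹ * min (japaneseBracket Φ)⁻¹ (japaneseBracket τ)⁻¹ := by
  obtain ⟨H, hH⟩ := exists_norm_mul_japaneseBracket_pow_le h 1
  simp only [pow_one] at hH
  have hg := integrable_norm_mul_japaneseBracket_pow ν g 2
  refine ⟨max 1 (2 * H * ∫ x, ‖g x‖ * japaneseBracket x ^ 2 ∂ν), by positivity,
    fun τ lam Φ hΦ ↦ (integral_norm_mul_norm_comp_inv_smul_le hg hH hΦ τ lam).trans ?_⟩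
  have := japaneseBracket.pos (τ - lam)
  have := japaneseBracket.pos Φ
  have := japaneseBracket.pos τ
  gcongr
  exact le_max_right _ _

/-- The estimate of the contribution II in the proof of Proposition 3.2: for Schwartz `g, h`,
`∫ |g(τ−μ)||h(μ/Φ)| (⟨Φ⟩⟨μ−λ⟩)^{−1} dμ ≲ ⟨τ−λ⟩^{−1} min(⟨Φ⟩^{−1},⟨τ⟩^{−1})`
uniformly over `|Φ| ≥ 1`. -/
theorem contribution_II_estimate (g h : SchwartzMap ℝ ℂ) :
    ∃ C > 0, ∀ (τ lam Φ : ℝ), 1 ≤ |Φ| →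
      (∫ μ : ℝ, ‖g (τ - μ)‖ * ‖h (μ / Φ)‖ *
          (Real.sqrt (1 + Φ ^ 2) * Real.sqrt (1 + (μ - lam) ^ 2))⁻¹) ≤
        C * (Real.sqrt (1 + (τ - lam) ^ 2))⁻¹ *
          min (Real.sqrt (1 + Φ ^ 2))⁻¹ (Real.sqrt (1 + τ ^ 2))⁻¹ := by
  obtain ⟨C, hC, bound⟩ := contribution_II_estimate_general (𝕜 := ℝ) volume g h
  simp only [japaneseBracket.eq_sqrt_one_add_sq, smul_eq_mul, inv_mul_eq_div] at bound
  exact ⟨C, hC, fun τ lam Φ hΦ ↦ bound τ lam Φ (abs_pos.1 (one_pos.trans_le hΦ))⟩
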